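/- Let G be a finite simple connected split graph, i.e., V(G) can be partitioned into a clique K and an independent set I. Then car(G) ≤ 2. -/

import Mathlib

open SimpleGraph

/-- A set `S` is cycle convex in `G` if no vertex `w` outside `S` is such that the
subgraph induced by `S ∪ {w}` contains a cycle through `w`. -/
def IsCycleConvex {V : Type*} (G : SimpleGraph V) (S : Set V) : Prop :=
  ∀ w : V, w ∉ S →
    ¬ ∃ c : (G.induce (S ∪ {w})).Walk ⟨w, Set.mem_union_right S rfl⟩
        ⟨w, Set.mem_union_right S rfl⟩, c.IsCycle

/-- The cycle convex hull of `S`: the smallest cycle convex set containing `S`. -/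
def cycleHull {V : Type*} (G : SimpleGraph V) (S : Set V) : Set V :=
  ⋂₀ {T : Set V | S ⊆ T ∧ IsCycleConvex G T}

/-- `S` is Carathéodory independent in the cycle convexity of `G`. -/
def CIndep {V : Type*} (G : SimpleGraph V) (S : Set V) : Prop :=
  ∃ p ∈ cycleHull G S, ∀ a ∈ S, p ∉ cycleHull G (S \ {a})

/-- The Carathéodory number of `G` in the cycle convexity. -/
noncomputable def carNumber {V : Type*} (G : SimpleGraph V) : ℕ :=
  sSup {n : ℕ | ∃ S : Set V, CIndep G S ∧ S.ncard = n}

/-!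
A vertex `w ∉ S` lies in the cycle interval of `S` exactly when it has two distinct neighbours in
the same component of `G[S]`; in particular, the hull contains the apex of a triangle whenever it
contains the base.

Let `K` be a clique covering all edges. A convex set meeting `K` in two vertices contains `K`, and
every superset of a convex set containing `K` is again convex. If `S` is not convex, some `w ∉ S`
has two neighbours in one component of `G[S]`, and then `S` contains two vertices `a`, `b` whose
hull contains `K`: either two neighbours of `w` in `K`, or the ends of an edge with `a ∉ K`
adjacent to `w`, where `b` and `w` lie in `K` and `w` is the apex of a triangle over `ab`. Hence
`S ∪ hull {a, b}` is convex, so a point of `hull S` outside `S` already lies in `hull {a, b}`.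
-/

section CycleConvexity

variable {V : Type*} {G : SimpleGraph V} {S T K I : Set V} {a b w : V}

lemma exists_isCycle_iff_exists_isPath :
    (∃ c : G.Walk w w, c.IsCycle) ↔
      ∃ x y, x ≠ y ∧ G.Adj w x ∧ G.Adj w y ∧ ∃ p : G.Walk x y, p.IsPath ∧ w ∉ p.support := by
  constructor
  · rintro ⟨_ | ⟨hwx, q⟩, hc⟩
    · exact absurd hc Walk.not_isCycle_nil
    obtain ⟨hq, hedge⟩ := (Walk.cons_isCycle_iff _ _).1 hc
    have hnil : ¬ q.Nil := fun h => hwx.ne h.eq.symm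
    have hadj := q.adj_penultimate hnil
    refine ⟨_, q.penultimate, fun h => hedge ?_, hwx, hadj.symm, q.dropLast, ?_⟩
    · have hlast := Walk.mk_penultimate_end_mem_edges hnil
      rwa [← h, Sym2.eq_swap] at hlast
    · rwa [← Walk.concat_isPath_iff hadj, Walk.concat_dropLast]
  · rintro ⟨x, y, hxy, hwx, hwy, p, hp, hwp⟩
    refine ⟨.cons hwx (p.concat hwy.symm),
      (Walk.cons_isCycle_iff _ _).2 ⟨hp.concat hwp hwy.symm, fun hedge => ?_⟩⟩
    rw [Walk.edges_concat, List.concat_eq_append, List.mem_append, List.mem_singleton] at hedge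
    rcases hedge with hedge | hedge
    · exact hwp (p.fst_mem_support_of_mem_edges hedge)
    · rw [Sym2.eq_swap, Sym2.congr_left] at hedge
      exact hxy hedge

lemma exists_isPath_induce_union_singleton_iff_reachable {x y : ↥(S ∪ {w})} (hw : w ∉ S) :
    (∃ p : (G.induce (S ∪ {w})).Walk x y,
        p.IsPath ∧ (⟨w, Set.mem_union_right S rfl⟩ : ↥(S ∪ {w})) ∉ p.support) ↔
      ∃ (hx : ↑x ∈ S) (hy : ↑y ∈ S), (G.induce S).Reachable ⟨x, hx⟩ ⟨y, hy⟩ := by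
  constructor
  · rintro ⟨p, -, hwp⟩
    have hsupp : ∀ v ∈ (p.map (Embedding.induce _).toHom).support, v ∈ S := by
      intro v hv
      rw [Walk.support_map, List.mem_map] at hv
      obtain ⟨v, hv, rfl⟩ := hv
      refine v.2.resolve_right fun h => hwp ?_
      rwa [← show v = ⟨w, _⟩ from Subtype.ext h]
    exact ⟨_, _, ⟨Walk.induce S _ hsupp⟩⟩
  · rintro ⟨hx, hy, hxy⟩
    obtain ⟨p, hp⟩ := hxy.exists_isPath
    let f := G.induceHomOfLE (Set.subset_union_left : S ⊆ S ∪ {w})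
    refine ⟨p.map f.toHom, hp.map f.injective, fun hwp => ?_⟩
    change _ ∈ (p.map f.toHom).support at hwp
    rw [Walk.support_map, List.mem_map] at hwp
    obtain ⟨v, -, hv⟩ := hwp
    have hvw : (v : V) = w := congrArg Subtype.val hv
    exact hw (hvw ▸ v.2)

lemma isCycleConvex_iff :
    IsCycleConvex G S ↔ ∀ w ∉ S, ∀ x y : S, x ≠ y → G.Adj w x → G.Adj w y →
      ¬ (G.induce S).Reachable x y := by
  refine forall₂_congr fun w hw => ?_
  rw [exists_isCycle_iff_exists_isPath]
  simp only [exists_isPath_induce_union_singleton_iff_reachable hw]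
  constructor
  · intro h x y hne hwx hwy hxy
    exact h ⟨⟨x, .inl x.2⟩, ⟨y, .inl y.2⟩, by simpa [Subtype.ext_iff] using hne, hwx, hwy,
      x.2, y.2, hxy⟩
  · rintro h ⟨x, y, hne, hwx, hwy, hx, hy, hxy⟩
    exact h ⟨x, hx⟩ ⟨y, hy⟩ (by simpa [Subtype.ext_iff] using hne) hwx hwy hxy

lemma IsCycleConvex.mem_of_triangle (hT : IsCycleConvex G T) (ha : a ∈ T) (hb : b ∈ T)
    (hab : G.Adj a b) (hwa : G.Adj w a) (hwb : G.Adj w b) : w ∈ T := by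
  by_contra hw
  have hab' : (G.induce T).Adj ⟨a, ha⟩ ⟨b, hb⟩ := hab
  exact isCycleConvex_iff.1 hT w hw ⟨a, ha⟩ ⟨b, hb⟩ hab'.ne hwa hwb hab'.reachable

lemma exists_adj_of_not_isCycleConvex (hS : ¬ IsCycleConvex G S) :
    ∃ w ∉ S, ∃ x ∈ S, ∃ y ∈ S, x ≠ y ∧ G.Adj w x ∧ G.Adj w y ∧
      (∃ z ∈ S, G.Adj x z) ∧ ∃ z ∈ S, G.Adj y z := by
  have exists_adj {x y : S} (hne : x ≠ y) (hxy : (G.induce S).Reachable x y) :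
      ∃ z ∈ S, G.Adj x z := by
    obtain ⟨p⟩ := hxy
    exact ⟨p.snd, p.snd.2, p.adj_snd (Walk.not_nil_of_ne hne)⟩
  rw [isCycleConvex_iff] at hS
  push Not at hS
  obtain ⟨w, hw, x, y, hne, hwx, hwy, hxy⟩ := hS
  exact ⟨w, hw, x, x.2, y, y.2, Subtype.coe_ne_coe.2 hne, hwx, hwy,
    exists_adj hne hxy, exists_adj hne.symm hxy.symm⟩

lemma isCycleConvex_sInter {𝒯 : Set (Set V)} (h𝒯 : ∀ T ∈ 𝒯, IsCycleConvex G T) :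
    IsCycleConvex G (⋂₀ 𝒯) := by
  rw [isCycleConvex_iff]
  intro w hw x y hne hwx hwy hxy
  refine hw fun T hT => by_contra fun hwT => ?_
  have hsub : ⋂₀ 𝒯 ⊆ T := Set.sInter_subset_of_mem hT
  exact isCycleConvex_iff.1 (h𝒯 T hT) w hwT ⟨x, hsub x.2⟩ ⟨y, hsub y.2⟩
    (by simpa [Subtype.ext_iff] using hne) hwx hwy (hxy.map (G.induceHomOfLE hsub).toHom)

lemma subset_cycleHull (G : SimpleGraph V) (S : Set V) : S ⊆ cycleHull G S :=
  Set.subset_sInter fun _ hT => hT.1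

lemma cycleHull_subset (hST : S ⊆ T) (hT : IsCycleConvex G T) : cycleHull G S ⊆ T :=
  Set.sInter_subset_of_mem ⟨hST, hT⟩

lemma isCycleConvex_cycleHull (G : SimpleGraph V) (S : Set V) :
    IsCycleConvex G (cycleHull G S) :=
  isCycleConvex_sInter fun _ hT => hT.2

lemma cycleHull_mono (G : SimpleGraph V) (hST : S ⊆ T) : cycleHull G S ⊆ cycleHull G T :=
  cycleHull_subset (hST.trans (subset_cycleHull G T)) (isCycleConvex_cycleHull G T)

lemma CIndep.subsingleton_or_subset (hS : CIndep G S) (hTS : T ⊆ S)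
    (hST : cycleHull G S ⊆ S ∪ cycleHull G T) : S.Subsingleton ∨ S ⊆ T := by
  obtain ⟨p, hp, hpS⟩ := hS
  rcases hST hp with hpmem | hpT
  · have eq_p (a : V) (ha : a ∈ S) : a = p :=
      by_contra fun hap => hpS a ha (subset_cycleHull G _ ⟨hpmem, Ne.symm hap⟩)
    exact .inl fun a ha b hb => (eq_p a ha).trans (eq_p b hb).symm
  · exact .inr fun a ha => by_contra fun haT =>
      hpS a ha (cycleHull_mono G (Set.subset_sdiff_singleton hTS haT) hpT)

lemma carNumber_le {n : ℕ} (h : ∀ S, CIndep G S → S.encard ≤ n) : carNumber G ≤ n :=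
  csSup_le' <| by
    rintro _ ⟨S, hS, rfl⟩
    exact ENat.toNat_le_of_le_natCast (h S hS)

lemma isVertexCover_of_union_eq_univ (hunion : K ∪ I = Set.univ) (hI : G.IsIndepSet I) :
    G.IsVertexCover K :=
  (isVertexCover_compl.2 hI).subset
    (Set.compl_subset_iff_union.2 ((Set.union_comm I K).trans hunion))

lemma IsCycleConvex.clique_subset (hT : IsCycleConvex G T) (hK : G.IsClique K)
    (hKT : (K ∩ T).Nontrivial) : K ⊆ T := by
  obtain ⟨a, ⟨haK, haT⟩, b, ⟨hbK, hbT⟩, hab⟩ := hKT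
  intro v hv
  by_cases hva : v = a
  · exact hva ▸ haT
  by_cases hvb : v = b
  · exact hvb ▸ hbT
  exact hT.mem_of_triangle haT hbT (hK haK hbK hab) (hK hv haK hva) (hK hv hbK hvb)

lemma IsCycleConvex.superset (hT : IsCycleConvex G T) (hK : G.IsClique K)
    (hcover : G.IsVertexCover K) (hKT : K ⊆ T) (hTS : T ⊆ S) : IsCycleConvex G S := by
  by_contra hS
  obtain ⟨w, hw, x, -, y, -, hne, hwx, hwy, -⟩ := exists_adj_of_not_isCycleConvex hS
  have hwK : w ∉ K := fun h => hw (hTS (hKT h))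
  have hxK : x ∈ K := (hcover hwx).resolve_left hwK
  have hyK : y ∈ K := (hcover hwy).resolve_left hwK
  exact hw (hTS (hT.mem_of_triangle (hKT hxK) (hKT hyK) (hK hxK hyK hne) hwx hwy))

lemma clique_subset_cycleHull_pair_of_adj (hK : G.IsClique K) (hcover : G.IsVertexCover K)
    (ha : a ∉ K) (hab : G.Adj a b) (haw : G.Adj a w) (hbw : b ≠ w) :
    K ⊆ cycleHull G {a, b} := by
  have hconv := isCycleConvex_cycleHull G {a, b}
  have hsub := subset_cycleHull G {a, b}
  have hbK : b ∈ K := (hcover hab).resolve_left ha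
  have hwK : w ∈ K := (hcover haw).resolve_left ha
  have hw : w ∈ cycleHull G {a, b} :=
    hconv.mem_of_triangle (hsub (by simp)) (hsub (by simp)) hab haw.symm (hK hwK hbK hbw.symm)
  exact hconv.clique_subset hK ⟨b, ⟨hbK, hsub (by simp)⟩, w, ⟨hwK, hw⟩, hbw⟩

lemma exists_pair_clique_subset_cycleHull (hK : G.IsClique K) (hcover : G.IsVertexCover K)
    (hS : ¬ IsCycleConvex G S) : ∃ a ∈ S, ∃ b ∈ S, K ⊆ cycleHull G {a, b} := by
  obtain ⟨w, hw, x, hx, y, hy, hne, hwx, hwy, ⟨x', hx', hxx'⟩, y', hy', hyy'⟩ :=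
    exists_adj_of_not_isCycleConvex hS
  by_cases hxK : x ∈ K
  · by_cases hyK : y ∈ K
    · have hsub := subset_cycleHull G {x, y}
      exact ⟨x, hx, y, hy, (isCycleConvex_cycleHull G {x, y}).clique_subset hK
        ⟨x, ⟨hxK, hsub (by simp)⟩, y, ⟨hyK, hsub (by simp)⟩, hne⟩⟩
    · exact ⟨y, hy, y', hy', clique_subset_cycleHull_pair_of_adj hK hcover hyK hyy' hwy.symm
        (ne_of_mem_of_not_mem hy' hw)⟩
  · exact ⟨x, hx, x', hx', clique_subset_cycleHull_pair_of_adj hK hcover hxK hxx' hwx.symm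
      (ne_of_mem_of_not_mem hx' hw)⟩

lemma exists_subset_encard_le_two_cycleHull_subset_union (hK : G.IsClique K)
    (hcover : G.IsVertexCover K) (S : Set V) :
    ∃ T ⊆ S, T.encard ≤ 2 ∧ cycleHull G S ⊆ S ∪ cycleHull G T := by
  by_cases hS : IsCycleConvex G S
  · exact ⟨∅, S.empty_subset, by simp,
      (cycleHull_subset subset_rfl hS).trans Set.subset_union_left⟩
  · obtain ⟨a, ha, b, hb, hKab⟩ := exists_pair_clique_subset_cycleHull hK hcover hS
    refine ⟨{a, b}, Set.pair_subset ha hb, (Set.encard_insert_le _ _).trans ?_,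
      cycleHull_subset Set.subset_union_left
        ((isCycleConvex_cycleHull G {a, b}).superset hK hcover hKab Set.subset_union_right)⟩
    rw [Set.encard_singleton, one_add_one_eq_two]

/-- The bound is on `Set.encard`, since `Set.ncard`, and hence `carNumber`, counts an infinite set
as having no elements. -/
theorem stmt_12_general (hK : G.IsClique K) (hcover : G.IsVertexCover K) (hS : CIndep G S) :
    S.encard ≤ 2 := by
  obtain ⟨T, hTS, hT, hST⟩ := exists_subset_encard_le_two_cycleHull_subset_union hK hcover S
  rcases hS.subsingleton_or_subset hTS hST with hsingle | hsub
  · exact (Set.encard_le_one_iff_subsingleton.2 hsingle).trans one_le_two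
  · exact (Set.encard_le_encard hsub).trans hT

end CycleConvexity

/-- A finite connected split graph has Caratheodory number at most 2. -/
theorem stmt_12 {V : Type*} [Fintype V] (G : SimpleGraph V) (hG : G.Connected)
    (K I : Set V) (hunion : K ∪ I = Set.univ) (hdisj : Disjoint K I)
    (hK : G.IsClique K) (hI : ∀ u ∈ I, ∀ v ∈ I, ¬ G.Adj u v) :
    carNumber G ≤ 2 := by
  have hcover := isVertexCover_of_union_eq_univ hunion fun u hu v hv _ => hI u hu v hv
  exact carNumber_le fun _ hS => stmt_12_general hK hcover hS
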